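/- Fix a real number c with 0 ≤ c < 1 and set ξ∨ = (2/3)√(1−c²)(√(3+c²) − c). Then ψ₃(t,ξ∨) ≤ 0 for all t ∈ [−1,1] and the second derivative (in t) of ψ₃(·,ξ∨) vanishes at t = ±1 (so ±1 are triple zeros of ψ₃(·,ξ∨)); moreover, for every ξ > 0 such that ψ₃(t,ξ) ≤ 0 for all t ∈ [−1,1], sup over t ∈ [−1,1] of |ψ₃(t,ξ)| is at least sup over t ∈ [−1,1] of |ψ₃(t,ξ∨)|; i.e., ξ∨ induces the optimal inner cubic G¹ approximant. -/

import Mathlib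

/-- Simplified radial error of the cubic G¹ Bézier approximant of the unit circular arc. -/
noncomputable def psi3 (c t ξ : ℝ) : ℝ :=
  (1/16) * (1 - t^2)^2 *
    (9*ξ^2*(c^2*t^2 + 1 - c^2) + 12*ξ*(2 - t^2)*c*Real.sqrt (1 - c^2)
      - 4*(4 - t^2)*(1 - c^2))

/-- Sup over `t ∈ [−1,1]` of `|f t|`. -/
noncomputable def errSup (f : ℝ → ℝ) : ℝ :=
  sSup ((fun t => |f t|) '' Set.Icc (-1 : ℝ) 1)

/-!
Write `s = √(1 - c²)`. As a quadratic in `ξ`, the non-trivial factor of `ψ₃` at `t = ±1` has the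
roots `ξ∨(c)` and `-ξ∨(-c)`, and away from `±1` it drops by `(1 - t²)(2s - 3cξ)²`. So `ξ` is inner
exactly when it lies between the two roots, and at `ξ = ξ∨` only `-(1 - t²)³(2s - 3cξ)² / 16` is
left, whose absolute value is largest at `t = 0`. Optimality can therefore be read off at `t = 0`
alone, where `ψ₃` is a convex quadratic in `ξ` whose maximum over `[0, ξ∨]` is attained at `ξ∨` as
soon as `c ≥ -1/√5`.
-/

open Set

section ErrSup

variable {f : ℝ → ℝ}

lemma abs_le_errSup (hf : ContinuousOn f (Icc (-1) 1)) {t : ℝ} (ht : t ∈ Icc (-1) 1) :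
    |f t| ≤ errSup f :=
  le_csSup (isCompact_Icc.bddAbove_image hf.abs) (mem_image_of_mem _ ht)

lemma errSup_le {M : ℝ} (h : ∀ t ∈ Icc (-1 : ℝ) 1, |f t| ≤ M) : errSup f ≤ M :=
  csSup_le ((nonempty_Icc.2 (by norm_num)).image _) (forall_mem_image.2 h)

end ErrSup

/-- The parameter `ξ` induces an inner approximant: one whose radial error is nowhere positive. -/
def IsInner (c ξ : ℝ) : Prop :=
  ∀ t ∈ Icc (-1 : ℝ) 1, psi3 c t ξ ≤ 0

/-- The parameter `ξ∨` of the optimal inner approximant. -/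
noncomputable def xiInner (c : ℝ) : ℝ :=
  (2 / 3) * √(1 - c ^ 2) * (√(3 + c ^ 2) - c)

section InnerApproximant

variable {c t ξ : ℝ}

lemma one_sub_sq_nonneg_of_mem_Icc (ht : t ∈ Icc (-1 : ℝ) 1) : 0 ≤ 1 - t ^ 2 :=
  sub_nonneg.2 (sq_le_one_iff_abs_le_one t |>.2 (abs_le.2 ht))

lemma le_sqrt_three_add_sq (c : ℝ) : c ≤ √(3 + c ^ 2) :=
  Real.le_sqrt_of_sq_le (by linarith)

lemma xiInner_nonneg (c : ℝ) : 0 ≤ xiInner c := by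
  have hr : 0 ≤ √(3 + c ^ 2) - c := sub_nonneg.2 (le_sqrt_three_add_sq c)
  unfold xiInner
  positivity

lemma xiInner_neg_sub_xiInner (c : ℝ) :
    xiInner (-c) - xiInner c = (4 / 3) * c * √(1 - c ^ 2) := by
  simp only [xiInner, neg_sq]
  ring

lemma xiInner_mul_xiInner_neg (hc : c ^ 2 ≤ 1) :
    xiInner c * xiInner (-c) = (4 / 3) * (1 - c ^ 2) := by
  have hs : √(1 - c ^ 2) ^ 2 = 1 - c ^ 2 := Real.sq_sqrt (sub_nonneg.2 hc)
  have hr : √(3 + c ^ 2) ^ 2 = 3 + c ^ 2 := Real.sq_sqrt (by positivity)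
  simp only [xiInner, neg_sq]
  linear_combination (4 / 9) * √(1 - c ^ 2) ^ 2 * hr + (4 / 3) * hs

lemma psi3_eq_mul_sub (hc : c ^ 2 ≤ 1) (t ξ : ℝ) :
    psi3 c t ξ = (1 / 16) * (1 - t ^ 2) ^ 2 *
      (9 * ((ξ - xiInner c) * (ξ + xiInner (-c)))
        - (1 - t ^ 2) * (2 * √(1 - c ^ 2) - 3 * c * ξ) ^ 2) := by
  have hs : √(1 - c ^ 2) ^ 2 = 1 - c ^ 2 := Real.sq_sqrt (sub_nonneg.2 hc)
  unfold psi3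
  linear_combination (1 / 16) * (1 - t ^ 2) ^ 2 * (4 * (1 - t ^ 2) * hs
    - 9 * ξ * xiInner_neg_sub_xiInner c + 9 * xiInner_mul_xiInner_neg hc)

lemma psi3_xiInner (hc : c ^ 2 ≤ 1) (t : ℝ) :
    psi3 c t (xiInner c) =
      -((1 / 16) * (2 * √(1 - c ^ 2) - 3 * c * xiInner c) ^ 2 * (1 - t ^ 2) ^ 3) := by
  rw [psi3_eq_mul_sub hc]
  ring

lemma continuous_psi3 (c ξ : ℝ) : Continuous fun t => psi3 c t ξ := by
  unfold psi3
  fun_prop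

lemma isInner_iff_mul_nonpos (hc : c ^ 2 ≤ 1) :
    IsInner c ξ ↔ (ξ - xiInner c) * (ξ + xiInner (-c)) ≤ 0 := by
  let factor (t : ℝ) : ℝ := 9 * ((ξ - xiInner c) * (ξ + xiInner (-c)))
    - (1 - t ^ 2) * (2 * √(1 - c ^ 2) - 3 * c * ξ) ^ 2
  have hψ (t : ℝ) : psi3 c t ξ = (1 / 16) * (1 - t ^ 2) ^ 2 * factor t := psi3_eq_mul_sub hc t ξ
  constructor
  · intro h
    have factor_nonpos : Ioo (-1) 1 ⊆ {t | factor t ≤ 0} := fun t ht => by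
      have ht_pos : 0 < 1 - t ^ 2 := sub_pos.2 (sq_lt_one_iff_abs_lt_one t |>.2 (abs_lt.2 ht))
      have hmul := h t (Ioo_subset_Icc_self ht)
      rw [hψ] at hmul
      exact nonpos_of_mul_nonpos_right hmul (by positivity)
    -- `ψ₃` itself vanishes at `t = 1`, so the sign of its factor there has to come from the limit.
    have factor_one_nonpos : factor 1 ≤ 0 := by
      have hclosed : IsClosed {t | factor t ≤ 0} :=
        isClosed_le (by fun_prop) continuous_const
      refine closure_minimal factor_nonpos hclosed ?_
      rw [closure_Ioo (by norm_num)]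
      norm_num
    simp only [factor] at factor_one_nonpos
    linarith
  · intro hroots t ht
    have ht_nonneg := one_sub_sq_nonneg_of_mem_Icc ht
    have hdrop : 0 ≤ (1 - t ^ 2) * (2 * √(1 - c ^ 2) - 3 * c * ξ) ^ 2 := by positivity
    rw [hψ]
    exact mul_nonpos_of_nonneg_of_nonpos (by positivity) (by simp only [factor]; linarith)

theorem isInner_iff_mem_Icc (hc : c ^ 2 ≤ 1) :
    IsInner c ξ ↔ ξ ∈ Icc (-xiInner (-c)) (xiInner c) := by
  have hX := xiInner_nonneg c
  have hY := xiInner_nonneg (-c)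
  rw [isInner_iff_mul_nonpos hc, mul_nonpos_iff, mem_Icc]
  constructor
  · rintro (⟨hXξ, hξY⟩ | ⟨hξX, hYξ⟩) <;> constructor <;> linarith
  · rintro ⟨hYξ, hξX⟩
    exact .inr ⟨by linarith, by linarith⟩

lemma isInner_xiInner (hc : c ^ 2 ≤ 1) : IsInner c (xiInner c) :=
  (isInner_iff_mem_Icc hc).2
    (right_mem_Icc.2 ((neg_nonpos.2 (xiInner_nonneg (-c))).trans (xiInner_nonneg c)))

theorem three_le_analyticOrderAt_psi3_xiInner (hc : c ^ 2 ≤ 1) {a : ℝ} (ha : a ^ 2 = 1) :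
    3 ≤ analyticOrderAt (fun t => psi3 c t (xiInner c)) a := by
  simp only [psi3_xiInner hc]
  refine (natCast_le_analyticOrderAt (n := 3) (by fun_prop)).2
    ⟨fun t => (1 / 16) * (2 * √(1 - c ^ 2) - 3 * c * xiInner c) ^ 2 * (t + a) ^ 3, by fun_prop,
      .of_forall fun t => ?_⟩
  rw [← ha, smul_eq_mul]
  ring

lemma iteratedDeriv_two_psi3_xiInner (hc : c ^ 2 ≤ 1) {a : ℝ} (ha : a ^ 2 = 1) :
    iteratedDeriv 2 (fun t => psi3 c t (xiInner c)) a = 0 := by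
  have hanalytic : AnalyticAt ℝ (fun t => psi3 c t (xiInner c)) a := by
    unfold psi3
    fun_prop
  exact (natCast_le_analyticOrderAt_iff_iteratedDeriv_eq_zero (n := 3) hanalytic).1
    (three_le_analyticOrderAt_psi3_xiInner hc ha) 2 (by norm_num)

lemma abs_psi3_xiInner_le_abs_psi3_zero (hc : c ^ 2 ≤ 1) (ht : t ∈ Icc (-1 : ℝ) 1) :
    |psi3 c t (xiInner c)| ≤ |psi3 c 0 (xiInner c)| := by
  have ht_cube : (1 - t ^ 2) ^ 3 ≤ (1 - 0 ^ 2) ^ 3 :=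
    pow_le_pow_left₀ (one_sub_sq_nonneg_of_mem_Icc ht) (by linarith [sq_nonneg t]) 3
  rw [abs_of_nonpos (isInner_xiInner hc t ht),
    abs_of_nonpos (isInner_xiInner hc 0 (by norm_num)), psi3_xiInner hc, psi3_xiInner hc,
    neg_neg, neg_neg]
  gcongr

lemma sq_le_one_of_neg_inv_sqrt_five_le (hc : -(√5)⁻¹ ≤ c) (hc1 : c ≤ 1) : c ^ 2 ≤ 1 := by
  have h5 : (√5)⁻¹ ≤ 1 := inv_le_one_of_one_le₀ (Real.one_le_sqrt.2 (by norm_num))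
  exact (sq_le_one_iff_abs_le_one c).2 (abs_le.2 ⟨by linarith, hc1⟩)

lemma neg_four_mul_le_one_sub_sq_mul (hc : -(√5)⁻¹ ≤ c) (hc1 : c ≤ 1) :
    -4 * c ≤ (1 - c ^ 2) * (√(3 + c ^ 2) - c) := by
  rcases le_total 0 c with hc0 | hc0
  · have hs : 0 ≤ 1 - c ^ 2 := sub_nonneg.2 (pow_le_one₀ hc0 hc1)
    have := mul_nonneg hs (sub_nonneg.2 (le_sqrt_three_add_sq c))
    linarith
  · have hc5 : c ^ 2 ≤ 1 / 5 := by
      have := pow_le_pow_left₀ (neg_nonneg.2 hc0) (neg_le.1 hc) 2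
      rwa [neg_sq, inv_pow, Real.sq_sqrt (by norm_num), inv_eq_one_div] at this
    have hr : -4 * c ≤ √(3 + c ^ 2) := Real.le_sqrt_of_sq_le (by linarith)
    calc -4 * c = 4 / 5 * (-4 * c - c) := by ring
      _ ≤ (1 - c ^ 2) * (√(3 + c ^ 2) - c) := by gcongr <;> linarith

lemma psi3_zero_le_psi3_zero_xiInner (hc : -(√5)⁻¹ ≤ c) (hc1 : c ≤ 1)
    (hξ : 0 ≤ ξ) (hξX : ξ ≤ xiInner c) :
    psi3 c 0 ξ ≤ psi3 c 0 (xiInner c) := by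
  have hs : 0 ≤ 1 - c ^ 2 := sub_nonneg.2 (sq_le_one_of_neg_inv_sqrt_five_le hc hc1)
  have hslope : 0 ≤ 9 * xiInner c * (1 - c ^ 2) + 24 * c * √(1 - c ^ 2) := by
    have hmul := mul_nonneg (Real.sqrt_nonneg (1 - c ^ 2))
      (sub_nonneg.2 (neg_four_mul_le_one_sub_sq_mul hc hc1))
    unfold xiInner
    linarith
  have hξ_term : 0 ≤ 9 * ξ * (1 - c ^ 2) := by positivity
  have hdiff : psi3 c 0 (xiInner c) - psi3 c 0 ξ = (1 / 16) * ((xiInner c - ξ) *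
      (9 * ξ * (1 - c ^ 2) + (9 * xiInner c * (1 - c ^ 2) + 24 * c * √(1 - c ^ 2)))) := by
    unfold psi3
    ring
  have hprod := mul_nonneg (sub_nonneg.2 hξX) (add_nonneg hξ_term hslope)
  linarith

/-- Arcs longer than a semicircle are included as `-1/√5 ≤ c < 0`. The bound `-1/√5` is sharp:
if `-1 < c < -1/√5`, the error at `ξ∨` exceeds the limit `1 - c²` of the errors as `ξ` tends to
`0`. -/
theorem stmt_5_general (hc : -(√5)⁻¹ ≤ c) (hc1 : c < 1) :
    IsInner c (xiInner c) ∧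
    iteratedDeriv 2 (fun t => psi3 c t (xiInner c)) 1 = 0 ∧
    iteratedDeriv 2 (fun t => psi3 c t (xiInner c)) (-1) = 0 ∧
    ∀ ξ > 0, IsInner c ξ →
      errSup (fun t => psi3 c t (xiInner c)) ≤ errSup (fun t => psi3 c t ξ) := by
  have hsq := sq_le_one_of_neg_inv_sqrt_five_le hc hc1.le
  refine ⟨isInner_xiInner hsq, iteratedDeriv_two_psi3_xiInner hsq (by norm_num),
    iteratedDeriv_two_psi3_xiInner hsq (by norm_num), fun ξ hξ hinner => errSup_le fun t ht => ?_⟩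
  have h0 : (0 : ℝ) ∈ Icc (-1) 1 := by norm_num
  have hξX : ξ ≤ xiInner c := ((isInner_iff_mem_Icc hsq).1 hinner).2
  calc |psi3 c t (xiInner c)|
      ≤ |psi3 c 0 (xiInner c)| := abs_psi3_xiInner_le_abs_psi3_zero hsq ht
    _ ≤ |psi3 c 0 ξ| := abs_le_abs_of_nonpos (isInner_xiInner hsq 0 h0)
        (psi3_zero_le_psi3_zero_xiInner hc hc1.le hξ.le hξX)
    _ ≤ errSup (fun t => psi3 c t ξ) := abs_le_errSup (continuous_psi3 c ξ).continuousOn h0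

end InnerApproximant

/-- `ξ∨ = (2/3)√(1−c²)(√(3+c²) − c)` induces the optimal inner cubic G¹ approximant,
with `±1` triple zeros of `ψ₃(·,ξ∨)` (the second derivative in `t` vanishes there). -/
theorem stmt_5 (c : ℝ) (hc0 : 0 ≤ c) (hc1 : c < 1) :
    (∀ t ∈ Set.Icc (-1 : ℝ) 1,
      psi3 c t ((2/3)*Real.sqrt (1 - c^2)*(Real.sqrt (3 + c^2) - c)) ≤ 0) ∧
    iteratedDeriv 2
      (fun t => psi3 c t ((2/3)*Real.sqrt (1 - c^2)*(Real.sqrt (3 + c^2) - c))) 1 = 0 ∧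
    iteratedDeriv 2
      (fun t => psi3 c t ((2/3)*Real.sqrt (1 - c^2)*(Real.sqrt (3 + c^2) - c))) (-1) = 0 ∧
    ∀ ξ > (0 : ℝ), (∀ t ∈ Set.Icc (-1 : ℝ) 1, psi3 c t ξ ≤ 0) →
      errSup (fun t => psi3 c t ((2/3)*Real.sqrt (1 - c^2)*(Real.sqrt (3 + c^2) - c))) ≤
        errSup (fun t => psi3 c t ξ) :=
  stmt_5_general ((neg_nonpos.2 (inv_nonneg.2 (Real.sqrt_nonneg 5))).trans hc0) hc1
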